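/- Let n ≥ 2. For every p, q ∈ 𝕂ⁿ: ⟨Ψ(p), Ψ(p)⟩_{n,1} = 0, the last coordinate of Ψ(p) is positive, and −⟨Ψ(p), Ψ(q)⟩_{n,1} = d_K(p,q)². (Thus Ψ maps kissing spheres to future-directed null vectors isometrically with respect to the Minkowskian distance d_M(x,y)² = −⟨x,y⟩_{n,1}.) -/

import Mathlib

/-!
Splitting off the two extreme coordinates, the Minkowski product of two vectors of `ℝ^{m+2}`
is `x₀y₀ + ∑ xᵢyᵢ - x_{m+1}y_{m+1}`, the sum being over the `m` middle coordinates. For two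
spheres, up to the factor `1 / (2φφ')`, this is
`(1 - ‖t‖²)(1 - ‖t'‖²) + 4⟪t, t'⟫ - (1 + ‖t‖²)(1 + ‖t'‖²) = -2‖t - t'‖²`;
the cases involving a hyperplane are direct. Nullity of `Ψ(p)` is the
isometry identity for `q = p`, because `d_K(p, p) = 0`.
-/

/-- A kissing sphere in `ℝⁿ`: either a sphere of diameter `φ > 0` in the half-space
`x₀ ≥ 0` tangent to the hyperplane `x₀ = 0` at `t ∈ ℝ^{n−1}`, or the hyperplane
`x₀ = h` for some `h > 0`. -/
inductive KSphere (n : ℕ) where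
  | sphere (φ : ℝ) (t : EuclideanSpace ℝ (Fin (n - 1))) (hφ : 0 < φ) : KSphere n
  | plane (h : ℝ) (hh : 0 < h) : KSphere n

/-- The distance `d_K` between kissing spheres. -/
noncomputable def dK {n : ℕ} : KSphere n → KSphere n → ℝ
  | .sphere φ t _, .sphere φ' t' _ => ‖t - t'‖ / Real.sqrt (φ * φ')
  | .sphere φ _ _, .plane h _ => Real.sqrt (h / φ)
  | .plane h _, .sphere φ _ _ => Real.sqrt (h / φ)
  | .plane _ _, .plane _ _ => 0

/-- The Minkowski inner product of signature `(n,1)` on `ℝ^{n+1}`: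
`⟨x,y⟩ = x₀y₀ + … + x_{n−1}y_{n−1} − x_n y_n`. -/
def mink (n : ℕ) (x y : Fin (n + 1) → ℝ) : ℝ :=
  (∑ i : Fin n, x i.castSucc * y i.castSucc) - x (Fin.last n) * y (Fin.last n)

/-- The map `Ψ : 𝕂ⁿ → ℝ^{n+1}`, sending a kissing sphere `(φ,t)` to
`(√2/(2φ))·(1 − ‖t‖², 2t, 1 + ‖t‖²)` and a kissing hyperplane `h` to
`(√2/2)·(−h, 0, …, 0, h)`. -/
noncomputable def Psi {n : ℕ} : KSphere n → (Fin (n + 1) → ℝ)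
  | .sphere φ t _ => fun i =>
      (Real.sqrt 2 / (2 * φ)) *
        (if _h0 : (i : ℕ) = 0 then 1 - ‖t‖ ^ 2
         else if _hn : (i : ℕ) = n then 1 + ‖t‖ ^ 2
         else 2 * t ⟨(i : ℕ) - 1, by have := i.isLt; omega⟩)
  | .plane h _ => fun i =>
      (Real.sqrt 2 / 2) *
        (if (i : ℕ) = 0 then -h else if (i : ℕ) = n then h else 0)

/-- The Minkowski product with its first spatial coordinate split off. -/
lemma mink_succ (m : ℕ) (x y : Fin (m + 1 + 1) → ℝ) :
    mink (m + 1) x y = x 0 * y 0 + (∑ i : Fin m, x i.succ.castSucc * y i.succ.castSucc)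
      - x (Fin.last (m + 1)) * y (Fin.last (m + 1)) := by
  simp [mink, Fin.sum_univ_succ]

section Coordinates

variable {m : ℕ} (φ h : ℝ) (t : EuclideanSpace ℝ (Fin (m + 1 - 1))) (hφ : 0 < φ) (hh : 0 < h)

lemma Psi_sphere_zero :
    Psi (KSphere.sphere (n := m + 1) φ t hφ) 0 = √2 / (2 * φ) * (1 - ‖t‖ ^ 2) := by
  simp [Psi]

lemma Psi_sphere_mid (i : Fin m) :
    Psi (KSphere.sphere (n := m + 1) φ t hφ) i.succ.castSucc = √2 / (2 * φ) * (2 * t i) := by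
  have hi : (i : ℕ) ≠ m := i.isLt.ne
  simp [Psi, hi]

lemma Psi_sphere_last :
    Psi (KSphere.sphere (n := m + 1) φ t hφ) (Fin.last (m + 1))
      = √2 / (2 * φ) * (1 + ‖t‖ ^ 2) := by
  simp [Psi]

lemma Psi_plane_zero : Psi (KSphere.plane (n := m + 1) h hh) 0 = √2 / 2 * (-h) := by
  simp [Psi]

lemma Psi_plane_mid (i : Fin m) :
    Psi (KSphere.plane (n := m + 1) h hh) i.succ.castSucc = 0 := by
  have hi : (i : ℕ) ≠ m := i.isLt.ne
  simp [Psi, hi]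

lemma Psi_plane_last :
    Psi (KSphere.plane (n := m + 1) h hh) (Fin.last (m + 1)) = √2 / 2 * h := by
  simp [Psi]

end Coordinates

lemma mink_comm (n : ℕ) (x y : Fin (n + 1) → ℝ) : mink n x y = mink n y x := by
  simp only [mink, mul_comm]

lemma mink_Psi_sphere_plane {m : ℕ} (φ h : ℝ) (t : EuclideanSpace ℝ (Fin (m + 1 - 1)))
    (hφ : 0 < φ) (hh : 0 < h) :
    -(mink (m + 1) (Psi (.sphere φ t hφ)) (Psi (.plane h hh))) = √(h / φ) ^ 2 := by
  have h2 : √2 ^ 2 = (2 : ℝ) := Real.sq_sqrt (by norm_num)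
  rw [mink_succ, Real.sq_sqrt (by positivity)]
  simp only [Psi_sphere_zero, Psi_sphere_last, Psi_plane_zero, Psi_plane_mid, Psi_plane_last,
    mul_zero, Finset.sum_const_zero]
  field_simp
  rw [h2]
  ring

lemma mink_Psi_sphere_sphere {m : ℕ} (φ φ' : ℝ) (t t' : EuclideanSpace ℝ (Fin (m + 1 - 1)))
    (hφ : 0 < φ) (hφ' : 0 < φ') :
    -(mink (m + 1) (Psi (.sphere φ t hφ)) (Psi (.sphere φ' t' hφ')))
      = (‖t - t'‖ / √(φ * φ')) ^ 2 := by
  have h2 : √2 ^ 2 = (2 : ℝ) := Real.sq_sqrt (by norm_num)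
  have hin : inner ℝ t t' = ∑ i : Fin m, t i * t' i := by
    rw [PiLp.inner_apply]
    exact Finset.sum_congr rfl fun i _ => mul_comm _ _
  have hsum : ∑ i : Fin m, √2 / (2 * φ) * (2 * t i) * (√2 / (2 * φ') * (2 * t' i))
      = √2 ^ 2 / (φ * φ') * inner ℝ t t' := by
    rw [hin, Finset.mul_sum]
    refine Finset.sum_congr rfl fun i _ => ?_
    field_simp
  rw [mink_succ, div_pow, Real.sq_sqrt (by positivity), norm_sub_sq_real]
  simp only [Psi_sphere_zero, Psi_sphere_mid, Psi_sphere_last]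
  rw [hsum]
  field_simp
  rw [h2]
  ring

lemma neg_mink_Psi {m : ℕ} (p q : KSphere (m + 1)) :
    -(mink (m + 1) (Psi p) (Psi q)) = dK p q ^ 2 := by
  rcases p with ⟨φ, t, hφ⟩ | ⟨h, hh⟩ <;> rcases q with ⟨φ', t', hφ'⟩ | ⟨h', hh'⟩
  · exact mink_Psi_sphere_sphere ..
  · exact mink_Psi_sphere_plane ..
  · rw [mink_comm]
    exact mink_Psi_sphere_plane ..
  · rw [mink_succ]
    simp only [Psi_plane_zero, Psi_plane_mid, Psi_plane_last, dK, mul_zero,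
      Finset.sum_const_zero]
    ring

lemma dK_self {n : ℕ} (p : KSphere n) : dK p p = 0 := by
  cases p <;> simp [dK]

/-- `Ψ` maps kissing spheres to future-directed null vectors, and
`−⟨Ψ(p), Ψ(q)⟩_{n,1} = d_K(p,q)²` for all kissing spheres `p, q`. -/
theorem Psi_isometry (n : ℕ) (hn : 2 ≤ n) (p q : KSphere n) :
    mink n (Psi p) (Psi p) = 0 ∧
      0 < Psi p (Fin.last n) ∧
      -(mink n (Psi p) (Psi q)) = (dK p q) ^ 2 := by
  obtain ⟨m, rfl⟩ : ∃ m, n = m + 1 := ⟨n - 1, by omega⟩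
  refine ⟨?_, ?_, neg_mink_Psi p q⟩
  · simpa [dK_self] using neg_mink_Psi p p
  · rcases p with ⟨φ, t, hφ⟩ | ⟨h, hh⟩
    · rw [Psi_sphere_last]
      positivity
    · rw [Psi_plane_last]
      positivity
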